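/- Let Ω ⊆ ℝ^n be a bounded convex set and f : Ω → ℝ a convex Lipschitz function with constant l. Define f̃(x) = sup{λf(y)+(1-λ)f(z) : x = λy+(1-λ)z, y,z ∈ Ω, λ ≥ 1} for x ∈ ℝ^n (assuming Ω affinely spans ℝ^n). Then f̃ is finite everywhere, agrees with f on Ω, and is convex on ℝ^n. -/

import Mathlib

/-- The set of values `λ f(y) + (1-λ) f(z)` over all representations
`x = λ y + (1-λ) z` with `y, z ∈ Ω` and `λ ≥ 1`. -/
def outerSet {E : Type*} [AddCommGroup E] [Module ℝ E] (Ω : Set E) (f : E → ℝ) (x : E) :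
    Set ℝ :=
  { r | ∃ (l : ℝ) (y z : E), y ∈ Ω ∧ z ∈ Ω ∧ 1 ≤ l ∧
      x = l • y + (1 - l) • z ∧ r = l * f y + (1 - l) * f z }

/-- The extension of `f` beyond `Ω` as the supremum over all such representations. -/
noncomputable def outerExt {E : Type*} [AddCommGroup E] [Module ℝ E]
    (Ω : Set E) (f : E → ℝ) (x : E) : ℝ :=
  sSup (outerSet Ω f x)

/-!
At an interior point `p` of `Ω`, the secant values `f p + t⁻¹ (f (p + t (x - p)) - f p)` belong to
`outerSet Ω f x` for small `t > 0`, and they dominate every value `λ f p + (1 - λ) f z` obtained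
from `x = λ p + (1 - λ) z`. They are also convex in `x` for fixed `p` and `t`, so the values with
`y` interior satisfy Jensen's inequality against `outerExt`. A value with `y` on the
boundary is bounded by a limit of such: adding a mass `ε` at an interior point `c` to both `λ y` and
`(λ - 1) z` leaves their difference `x` unchanged and makes `y` interior.

Finiteness holds because any `w ∈ Ω` gives `λ f y + (1 - λ) f z ≤ f w + K ‖x - w‖`: the homothety
with center `z` that maps `x` to `y` maps `w` to a point of `Ω` at distance `‖x - w‖ / λ` from `y`.
-/

open AffineMap Filter Topology

section UnnormalizedWeights

variable {𝕜 E β : Type*} [Field 𝕜] [AddCommGroup E] [Module 𝕜 E] {Ω : Set E} {x y w : E} {a b : 𝕜}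

lemma eq_div_smul_add_div_smul_of_add_smul_eq (hab : a + b ≠ 0)
    (hw : (a + b) • w = a • x + b • y) : w = (a / (a + b)) • x + (b / (a + b)) • y := by
  rw [← inv_smul_smul₀ hab w, hw, smul_add, smul_smul, smul_smul, inv_mul_eq_div, inv_mul_eq_div]

variable [LinearOrder 𝕜] [IsStrictOrderedRing 𝕜]

lemma mem_of_convex_of_add_smul_eq (hΩ : Convex 𝕜 Ω) (hx : x ∈ Ω) (hy : y ∈ Ω) (ha : 0 ≤ a)
    (hb : 0 ≤ b) (hab : 0 < a + b) (hw : (a + b) • w = a • x + b • y) : w ∈ Ω :=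
  eq_div_smul_add_div_smul_of_add_smul_eq hab.ne' hw ▸ convex_iff_div.mp hΩ hx hy ha hb hab

lemma add_smul_map_le_of_convexOn [AddCommMonoid β] [PartialOrder β] [Module 𝕜 β]
    [PosSMulMono 𝕜 β] {f : E → β} (hf : ConvexOn 𝕜 Ω f) (hx : x ∈ Ω) (hy : y ∈ Ω) (ha : 0 ≤ a)
    (hb : 0 ≤ b) (hab : 0 < a + b) (hw : (a + b) • w = a • x + b • y) :
    (a + b) • f w ≤ a • f x + b • f y := by
  have hfw : f w ≤ (a / (a + b)) • f x + (b / (a + b)) • f y :=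
    eq_div_smul_add_div_smul_of_add_smul_eq hab.ne' hw ▸
      (convexOn_iff_div.mp hf).2 hx hy ha hb hab
  calc (a + b) • f w
      ≤ (a + b) • ((a / (a + b)) • f x + (b / (a + b)) • f y) :=
        smul_le_smul_of_nonneg_left hfw hab.le
    _ = a • f x + b • f y := by
        rw [smul_add, smul_smul, smul_smul, mul_div_cancel₀ _ hab.ne', mul_div_cancel₀ _ hab.ne']

end UnnormalizedWeights

section Module

variable {E : Type*} [AddCommGroup E] [Module ℝ E] {Ω : Set E} {f : E → ℝ} {x p : E} {r t : ℝ}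

lemma le_of_mem_outerSet (hf : ConvexOn ℝ Ω f) (hx : x ∈ Ω) (hr : r ∈ outerSet Ω f x) :
    r ≤ f x := by
  obtain ⟨m, y, z, -, hz, hm, hxyz, rfl⟩ := hr
  have hy : (1 + (m - 1)) • y = (1 : ℝ) • x + (m - 1) • z := by rw [hxyz]; module
  have hfy := add_smul_map_le_of_convexOn hf hx hz zero_le_one (sub_nonneg.mpr hm)
    (by linarith) hy
  simp only [smul_eq_mul] at hfy
  linarith

lemma isGreatest_outerSet (hf : ConvexOn ℝ Ω f) (hx : x ∈ Ω) :
    IsGreatest (outerSet Ω f x) (f x) :=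
  ⟨⟨1, x, x, hx, hx, le_rfl, by simp, by simp⟩, fun _ hr ↦ le_of_mem_outerSet hf hx hr⟩

lemma eqOn_outerExt (hf : ConvexOn ℝ Ω f) : Set.EqOn (outerExt Ω f) f Ω :=
  fun _ hx ↦ (isGreatest_outerSet hf hx).csSup_eq

/-- The dilation of the graph of `f` about `(p, f p)` by the factor `t⁻¹`: the value at `x` is read
off by extending affinely the secant from `p` to `homothety p t x = p + t (x - p)`. For convex `f`
it decreases to `f p + f'(p; x - p)` as `t` decreases to `0`; at `t = 0` it is the junk value
`f p`. -/
noncomputable def secantExtrapolation (f : E → ℝ) (p : E) (t : ℝ) (x : E) : ℝ :=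
  f p + t⁻¹ * (f (homothety p t x) - f p)

lemma secantExtrapolation_mem_outerSet (hp : p ∈ Ω) (ht₀ : 0 < t) (ht₁ : t ≤ 1)
    (hpx : homothety p t x ∈ Ω) : secantExtrapolation f p t x ∈ outerSet Ω f x := by
  refine ⟨t⁻¹, homothety p t x, p, hpx, hp, (one_le_inv₀ ht₀).mpr ht₁, ?_, ?_⟩
  · rw [homothety_apply, vsub_eq_sub, vadd_eq_add, smul_add, inv_smul_smul₀ ht₀.ne']
    module
  · rw [secantExtrapolation]
    ring

lemma le_secantExtrapolation {z : E} {m : ℝ} (hf : ConvexOn ℝ Ω f) (hp : p ∈ Ω) (hz : z ∈ Ω)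
    (hm : 1 ≤ m) (hx : x = m • p + (1 - m) • z) (ht : 0 < t) (hpx : homothety p t x ∈ Ω) :
    m * f p + (1 - m) * f z ≤ secantExtrapolation f p t x := by
  set w : ℝ := t * (m - 1)
  have hmem : (1 + w) * f p + (1 - (1 + w)) * f z ∈ outerSet Ω f (homothety p t x) := by
    refine ⟨1 + w, p, z, hp, hz, ?_, ?_, rfl⟩
    · exact le_add_of_nonneg_right (mul_nonneg ht.le (sub_nonneg.mpr hm))
    · rw [homothety_apply, vsub_eq_sub, vadd_eq_add, hx]
      module
  calc m * f p + (1 - m) * f z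
      = f p + t⁻¹ * ((1 + w) * f p + (1 - (1 + w)) * f z - f p) := by
        simp only [w]
        field_simp
        ring
    _ ≤ secantExtrapolation f p t x := by
        rw [secantExtrapolation]
        gcongr
        exact le_of_mem_outerSet hf hpx hmem

lemma convexOn_secantExtrapolation (hf : ConvexOn ℝ Ω f) (ht : 0 ≤ t) :
    ConvexOn ℝ (homothety p t ⁻¹' Ω) (secantExtrapolation f p t) := by
  have hcomp : ConvexOn ℝ (homothety p t ⁻¹' Ω) (f ∘ homothety p t) :=
    hf.comp_affineMap (homothety p t)
  refine (((hcomp.add_const (-f p)).smul (inv_nonneg.mpr ht)).add_const (f p)).congr fun x _ ↦ ?_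
  simp only [secantExtrapolation, Pi.add_apply, Function.comp_apply, smul_eq_mul]
  ring

lemma exists_mem_combo_eq_and_le_of_add_smul_eq {y z c : E} {m ε : ℝ} (hf : ConvexOn ℝ Ω f)
    (hz : z ∈ Ω) (hc : c ∈ Ω) (hm : 1 ≤ m) (hε : 0 < ε) (hp : (m + ε) • p = m • y + ε • c) :
    ∃ z' ∈ Ω, m • y + (1 - m) • z = (m + ε) • p + (1 - (m + ε)) • z' ∧
      (m + ε) * f p + (1 - m) * f z - ε * f c ≤ (m + ε) * f p + (1 - (m + ε)) * f z' := by
  have hm₀ : 0 ≤ m - 1 := sub_nonneg.mpr hm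
  have hpos : 0 < m - 1 + ε := by linarith
  obtain ⟨z', hz'⟩ : ∃ z' : E, (m - 1 + ε) • z' = (m - 1) • z + ε • c :=
    ⟨_, smul_inv_smul₀ hpos.ne' _⟩
  refine ⟨z', mem_of_convex_of_add_smul_eq hf.1 hz hc hm₀ hε.le hpos hz', ?_, ?_⟩
  · calc m • y + (1 - m) • z = (m • y + ε • c) - ((m - 1) • z + ε • c) := by module
      _ = (m + ε) • p + (1 - (m + ε)) • z' := by rw [← hp, ← hz']; module
  · have hfz' := add_smul_map_le_of_convexOn hf hz hc hm₀ hε.le hpos hz'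
    simp only [smul_eq_mul] at hfz'
    linarith

end Module

section Topology

variable {E : Type*} [AddCommGroup E] [Module ℝ E] [TopologicalSpace E] [IsTopologicalAddGroup E]
  [ContinuousSMul ℝ E] {Ω : Set E} {f : E → ℝ} {p : E}

lemma eventually_homothety_mem_of_mem_interior_center (hp : p ∈ interior Ω) (x : E) :
    ∀ᶠ t : ℝ in 𝓝 0, homothety p t x ∈ Ω := by
  have htendsto : Tendsto (fun t : ℝ ↦ homothety p t x) (𝓝 0) (𝓝 p) := by
    simpa [homothety_eq_lineMap] using (lineMap_continuous (R := ℝ) (p := p) (q := x)).tendsto 0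
  exact htendsto.eventually_mem (mem_interior_iff_mem_nhds.mp hp)

lemma eventually_secantExtrapolation_mem_outerSet (f : E → ℝ) (hp : p ∈ interior Ω) (x : E) :
    ∀ᶠ t : ℝ in 𝓝[>] 0, secantExtrapolation f p t x ∈ outerSet Ω f x := by
  filter_upwards [Ioc_mem_nhdsGT zero_lt_one,
    nhdsWithin_le_nhds (eventually_homothety_mem_of_mem_interior_center hp x)] with t ht htx
  exact secantExtrapolation_mem_outerSet (interior_subset hp) ht.1 ht.2 htx

lemma outerSet_nonempty (hΩ : (interior Ω).Nonempty) (f : E → ℝ) (x : E) :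
    (outerSet Ω f x).Nonempty :=
  let ⟨_, hp⟩ := hΩ
  let ⟨_, ht⟩ := (eventually_secantExtrapolation_mem_outerSet f hp x).exists
  ⟨_, ht⟩

lemma le_combo_of_mem_interior {z a b : E} {m α β A B : ℝ} (hf : ConvexOn ℝ Ω f)
    (hA : A ∈ upperBounds (outerSet Ω f a)) (hB : B ∈ upperBounds (outerSet Ω f b))
    (hα : 0 ≤ α) (hβ : 0 ≤ β) (hαβ : α + β = 1) (hp : p ∈ interior Ω) (hz : z ∈ Ω) (hm : 1 ≤ m)
    (hab : α • a + β • b = m • p + (1 - m) • z) :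
    m * f p + (1 - m) * f z ≤ α * A + β * B := by
  have hmem (x : E) : ∀ᶠ t : ℝ in 𝓝[>] 0, homothety p t x ∈ Ω :=
    nhdsWithin_le_nhds (eventually_homothety_mem_of_mem_interior_center hp x)
  obtain ⟨t, ht, hta, htb, hfa, hfb⟩ := ((eventually_mem_nhdsWithin (a := (0 : ℝ))).and <|
    (hmem a).and <| (hmem b).and <| (eventually_secantExtrapolation_mem_outerSet f hp a).and <|
    eventually_secantExtrapolation_mem_outerSet f hp b).exists
  have hconv := convexOn_secantExtrapolation (p := p) hf (le_of_lt ht)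
  calc m * f p + (1 - m) * f z
      ≤ secantExtrapolation f p t (α • a + β • b) :=
        le_secantExtrapolation hf (interior_subset hp) hz hm hab ht (hconv.1 hta htb hα hβ hαβ)
    _ ≤ α * secantExtrapolation f p t a + β * secantExtrapolation f p t b :=
        hconv.2 hta htb hα hβ hαβ
    _ ≤ α * A + β * B := by
        gcongr
        · exact hA hfa
        · exact hB hfb

lemma mem_upperBounds_outerSet_of_forall_mem_interior {x : E} {V : ℝ} (hf : ConvexOn ℝ Ω f)
    (hfc : ContinuousOn f Ω) (hΩ : (interior Ω).Nonempty)
    (hV : ∀ p ∈ interior Ω, ∀ z ∈ Ω, ∀ m : ℝ, 1 ≤ m → x = m • p + (1 - m) • z →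
      m * f p + (1 - m) * f z ≤ V) :
    V ∈ upperBounds (outerSet Ω f x) := by
  obtain ⟨c, hc⟩ := hΩ
  have hcΩ : c ∈ Ω := interior_subset hc
  rintro _ ⟨m, y, z, hy, hz, hm, hx, rfl⟩
  have hm₀ : 0 < m := by linarith
  let p (ε : ℝ) : E := (m / (m + ε)) • y + (ε / (m + ε)) • c
  have hp_interior {ε : ℝ} (hε : 0 < ε) : p ε ∈ interior Ω :=
    hf.1.combo_self_interior_mem_interior hy hc (by positivity) (by positivity) (by field_simp)
  have hbound {ε : ℝ} (hε : 0 < ε) : (m + ε) * f (p ε) + (1 - m) * f z - ε * f c ≤ V := by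
    have hpε : (m + ε) • p ε = m • y + ε • c := by
      simp only [p, smul_add, smul_smul, mul_div_cancel₀ _ (add_pos hm₀ hε).ne']
    obtain ⟨z', hz', hx', hle⟩ := exists_mem_combo_eq_and_le_of_add_smul_eq hf hz hcΩ hm hε hpε
    exact hle.trans (hV _ (hp_interior hε) z' hz' _ (by linarith) (hx.trans hx'))
  have hp_tendsto : Tendsto p (𝓝[>] 0) (𝓝[Ω] y) := by
    have hcont : ContinuousAt p 0 := by
      have : m + 0 ≠ 0 := by simpa using hm₀.ne'
      fun_prop (disch := assumption)
    refine tendsto_nhdsWithin_iff.mpr ⟨?_, ?_⟩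
    · simpa [p, hm₀.ne'] using hcont.tendsto.mono_left nhdsWithin_le_nhds
    · exact eventually_mem_nhdsWithin.mono fun ε hε ↦ interior_subset (hp_interior hε)
  have hε_tendsto : Tendsto (fun ε : ℝ ↦ ε) (𝓝[>] 0) (𝓝 0) := nhdsWithin_le_nhds
  have hlim := (((hε_tendsto.const_add m).mul ((hfc y hy).tendsto.comp hp_tendsto)).add_const
    ((1 - m) * f z)).sub (hε_tendsto.mul_const (f c))
  simp only [add_zero, zero_mul, sub_zero] at hlim
  exact le_of_tendsto hlim (eventually_mem_nhdsWithin.mono fun ε hε ↦ hbound hε)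

lemma convexOn_outerExt (hf : ConvexOn ℝ Ω f) (hfc : ContinuousOn f Ω)
    (hΩ : (interior Ω).Nonempty) (hbdd : ∀ x, BddAbove (outerSet Ω f x)) :
    ConvexOn ℝ Set.univ (outerExt Ω f) := by
  refine ⟨convex_univ, fun a _ b _ α β hα hβ hαβ ↦ csSup_le (outerSet_nonempty hΩ f _) ?_⟩
  exact mem_upperBounds_outerSet_of_forall_mem_interior hf hfc hΩ fun p hp z hz m hm hab ↦
    le_combo_of_mem_interior hf (fun _ ↦ le_csSup (hbdd a)) (fun _ ↦ le_csSup (hbdd b))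
      hα hβ hαβ hp hz hm hab

end Topology

section Lipschitz

variable {E : Type*} [SeminormedAddCommGroup E] [NormedSpace ℝ E] {Ω : Set E} {f : E → ℝ}
  {K : NNReal}

lemma le_add_mul_dist_of_mem_outerSet {x w : E} {r : ℝ} (hf : ConvexOn ℝ Ω f)
    (hlip : LipschitzOnWith K f Ω) (hw : w ∈ Ω) (hr : r ∈ outerSet Ω f x) :
    r ≤ f w + K * dist x w := by
  obtain ⟨m, y, z, hy, hz, hm, rfl, rfl⟩ := hr
  have hm₀ : 0 < m := by linarith
  set u : E := homothety z m⁻¹ w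
  have hwu : w = m • u + (1 - m) • z := by
    simp only [u, homothety_apply, vsub_eq_sub, vadd_eq_add, smul_add, smul_inv_smul₀ hm₀.ne']
    module
  have hu : u ∈ Ω := by
    refine mem_of_convex_of_add_smul_eq hf.1 hw hz zero_le_one (sub_nonneg.mpr hm)
      (by linarith) ?_
    rw [hwu]
    module
  have hdist : m * dist y u = dist (m • y + (1 - m) • z) w := by
    rw [hwu, dist_add_right, dist_smul₀, Real.norm_of_nonneg hm₀.le]
  calc m * f y + (1 - m) * f z
      ≤ m * (f u + K * dist y u) + (1 - m) * f z := by
        gcongr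
        exact hlip.le_add_mul hy hu
    _ = m * f u + (1 - m) * f z + K * dist (m • y + (1 - m) • z) w := by rw [← hdist]; ring
    _ ≤ f w + K * dist (m • y + (1 - m) • z) w := by
        gcongr
        exact le_of_mem_outerSet hf hw ⟨m, u, z, hu, hz, hm, hwu, rfl⟩

theorem outerExt_extension_general (hf : ConvexOn ℝ Ω f) (hΩ : (interior Ω).Nonempty)
    (hlip : LipschitzOnWith K f Ω) :
    (∀ x, (outerSet Ω f x).Nonempty ∧ BddAbove (outerSet Ω f x)) ∧
    Set.EqOn (outerExt Ω f) f Ω ∧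
    ConvexOn ℝ Set.univ (outerExt Ω f) := by
  obtain ⟨w, hw⟩ := hΩ.mono interior_subset
  have hbdd (x : E) : BddAbove (outerSet Ω f x) :=
    ⟨f w + K * dist x w, fun _ hr ↦ le_add_mul_dist_of_mem_outerSet hf hlip hw hr⟩
  exact ⟨fun x ↦ ⟨outerSet_nonempty hΩ f x, hbdd x⟩, eqOn_outerExt hf,
    convexOn_outerExt hf hlip.continuousOn hΩ hbdd⟩

end Lipschitz

/-- Dragomirescu–Ivan type extension: for a bounded convex `Ω` affinely spanning `ℝⁿ`
and `f` convex and Lipschitz on `Ω`, the function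
`f̃(x) = sup{λ f(y) + (1-λ) f(z) : x = λ y + (1-λ) z, y, z ∈ Ω, λ ≥ 1}`
is finite everywhere, agrees with `f` on `Ω`, and is convex on `ℝⁿ`. -/
theorem outerExt_extension {n : ℕ}
    (Ω : Set (EuclideanSpace ℝ (Fin n))) (hb : Bornology.IsBounded Ω)
    (hΩ : Convex ℝ Ω) (hspan : affineSpan ℝ Ω = ⊤)
    (f : EuclideanSpace ℝ (Fin n) → ℝ) (hf : ConvexOn ℝ Ω f)
    (l : ℝ) (hlip : ∀ x ∈ Ω, ∀ y ∈ Ω, |f x - f y| ≤ l * ‖x - y‖) :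
    (∀ x, (outerSet Ω f x).Nonempty ∧ BddAbove (outerSet Ω f x)) ∧
    Set.EqOn (outerExt Ω f) f Ω ∧
    ConvexOn ℝ Set.univ (outerExt Ω f) :=
  outerExt_extension_general hf (hΩ.interior_nonempty_iff_affineSpan_eq_top.mpr hspan)
    (.of_dist_le' (K := l) (by simpa only [dist_eq_norm, Real.norm_eq_abs] using hlip))
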